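/- Suppose the pair (A,B) is controllable (the controllability matrix [B, AB, …, A^{n-1}B] has rank n) and A is nonsingular. Then for every initial state ξ in the reachable set R, the infimum defining V(ξ) is attained by an admissible control u* ∈ U(ξ) satisfying u*(t) ∈ {-1, 0, 1} for almost every t ∈ [0,T], and moreover ‖u*‖₀ = ‖u*‖₁ = V(ξ). -/

import Mathlib

open MeasureTheory Set

noncomputable section

/-- Controllability matrix `[B, AB, ..., A^{n-1}B]`. -/
def ctrbMatrix (n : ℕ) (A : Matrix (Fin n) (Fin n) ℝ) (B : Fin n → ℝ) :
    Matrix (Fin n) (Fin n) ℝ :=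
  Matrix.of fun i j => (A ^ (j : ℕ)).mulVec B i

/-- `∫₀ᵀ e^{-As} B u(s) ds`. -/
def stateInt (n : ℕ) (T : ℝ) (A : Matrix (Fin n) (Fin n) ℝ) (B : Fin n → ℝ)
    (u : ℝ → ℝ) : Fin n → ℝ :=
  ∫ s in Icc (0:ℝ) T, u s • (NormedSpace.exp ((-s) • A)).mulVec B

/-- The magnitude constraint `‖u‖_∞ ≤ 1` on `[0,T]`. -/
def MagBdd (T : ℝ) (u : ℝ → ℝ) : Prop := ∀ t ∈ Icc (0:ℝ) T, |u t| ≤ 1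

/-- The `L¹` norm of `u` on `[0,T]`. -/
def L1Norm (T : ℝ) (u : ℝ → ℝ) : ℝ := ∫ t in Icc (0:ℝ) T, |u t|

/-- The `L⁰` norm of `u`: Lebesgue measure of `{t ∈ [0,T] : u t ≠ 0}`. -/
def L0Norm (T : ℝ) (u : ℝ → ℝ) : ℝ := (volume {t ∈ Icc (0:ℝ) T | u t ≠ 0}).toReal

/-- Admissible controls steering `ξ` to `0` at time `T`:
`∫₀ᵀ e^{-As} B u(s) ds = -ξ` and `‖u‖_∞ ≤ 1`. -/
def Admissible (n : ℕ) (T : ℝ) (A : Matrix (Fin n) (Fin n) ℝ) (B : Fin n → ℝ)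
    (ξ : Fin n → ℝ) (u : ℝ → ℝ) : Prop :=
  Measurable u ∧ MagBdd T u ∧ stateInt n T A B u = -ξ

/-- Value function of the maximum hands-off (`L⁰`-optimal) control problem. -/
def V0 (n : ℕ) (T : ℝ) (A : Matrix (Fin n) (Fin n) ℝ) (B : Fin n → ℝ)
    (ξ : Fin n → ℝ) : ℝ :=
  sInf {c | ∃ u, Admissible n T A B ξ u ∧ c = L0Norm T u}

/-- Value function of the `L¹`-optimal control problem. -/
def V1 (n : ℕ) (T : ℝ) (A : Matrix (Fin n) (Fin n) ℝ) (B : Fin n → ℝ)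
    (ξ : Fin n → ℝ) : ℝ :=
  sInf {c | ∃ u, Admissible n T A B ξ u ∧ c = L1Norm T u}

/-- The reachable set `R`. -/
def Reach (n : ℕ) (T : ℝ) (A : Matrix (Fin n) (Fin n) ℝ) (B : Fin n → ℝ) :
    Set (Fin n → ℝ) :=
  {x | ∃ u, Measurable u ∧ MagBdd T u ∧ x = stateInt n T A B u}

/-- The set `R_α`. -/
def ReachL1 (n : ℕ) (T : ℝ) (A : Matrix (Fin n) (Fin n) ℝ) (B : Fin n → ℝ)
    (α : ℝ) : Set (Fin n → ℝ) :=
  {x | ∃ u, Measurable u ∧ MagBdd T u ∧ L1Norm T u ≤ α ∧ x = stateInt n T A B u}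

/-!
A closed bounded convex subset of `L²` is weakly compact, so among the controls bounded by `1` that
steer `ξ` to the origin there is one, `u`, of least `L¹` norm. Lyapunov's convexity theorem, with
density `|u|` and integrand `(sign u • e^{-As} B, |sign u|)`, produces a measurable set `s` such
that `sign u` restricted to `s` steers `ξ` to the origin and has the same `L¹` norm as `u`. This
control takes values in `{-1, 0, 1}`, so its `L⁰` and `L¹` norms agree; since the `L¹` norm never
exceeds the `L⁰` norm for controls bounded by `1`, it minimizes the `L⁰` norm too.

Lyapunov's theorem itself comes from extreme points: on an atomless measure space, a finite-rank
operator kills some nonzero `h` with `|h| ≤ g` as soon as `g > 0`, so an extreme point `ψ` of an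
order interval `[a, b]` cut by finitely many linear equations satisfies `(ψ - a) ⊓ (b - ψ) = 0`.
-/

section Reflexive

open NormedSpace

theorem surjective_inclusionInDoubleDual_of_innerProductSpace (H : Type*) [NormedAddCommGroup H]
    [InnerProductSpace ℝ H] [CompleteSpace H] :
    Function.Surjective (inclusionInDoubleDual ℝ H) := by
  intro Φ
  refine ⟨(InnerProductSpace.toDual ℝ H).symm (Φ ∘L innerSL ℝ), ?_⟩
  ext ℓ
  obtain ⟨y, rfl⟩ := (InnerProductSpace.toDual ℝ H).surjective ℓ
  rw [dual_def, InnerProductSpace.toDual_apply_apply, real_inner_comm,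
    InnerProductSpace.toDual_symm_apply]
  rfl

variable {X : Type*} [NormedAddCommGroup X] [NormedSpace ℝ X] {K : Set X}

theorem isCompact_toWeakSpace_image (hX : Function.Surjective (inclusionInDoubleDual ℝ X))
    (hconv : Convex ℝ K) (hclosed : IsClosed K) (hbdd : Bornology.IsBounded K) :
    IsCompact (toWeakSpace ℝ X '' K) := by
  rw [← hclosed.closure_eq, hconv.toWeakSpace_closure ℝ]
  refine isCompact_closure_of_isBounded ℝ X _ ?_ ?_
  · rwa [preimage_image_eq _ (toWeakSpace ℝ X).injective]
  · have hsurj : Function.Surjective (inclusionInDoubleDualWeak ℝ X) := hX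
    rw [hsurj.range_eq]
    exact subset_univ _

theorem extremePoints_nonempty_of_isClosed_of_isBounded
    (hX : Function.Surjective (inclusionInDoubleDual ℝ X)) (hne : K.Nonempty)
    (hconv : Convex ℝ K) (hclosed : IsClosed K) (hbdd : Bornology.IsBounded K) :
    (K.extremePoints ℝ).Nonempty := by
  have : LocallyConvexSpace ℝ (WeakSpace ℝ X) := WeakBilin.locallyConvexSpace
  have hweak := (isCompact_toWeakSpace_image hX hconv hclosed hbdd).extremePoints_nonempty
    (hne.image _)
  rwa [← image_extremePoints, image_nonempty] at hweak

theorem exists_isMinOn_of_convexOn_of_isBounded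
    (hX : Function.Surjective (inclusionInDoubleDual ℝ X)) {f : X → ℝ} (hf : ConvexOn ℝ K f)
    (hcont : ContinuousOn f K) (hne : K.Nonempty) (hclosed : IsClosed K)
    (hbdd : Bornology.IsBounded K) : ∃ x ∈ K, IsMinOn f K x := by
  have hsub : ∀ r, IsClosed (toWeakSpace ℝ X '' {x ∈ K | f x ≤ r}) := fun r ↦
    (isCompact_toWeakSpace_image hX (hf.convex_le r)
      (hcont.preimage_isClosed_of_isClosed hclosed isClosed_Iic)
      (hbdd.subset (sep_subset _ _))).isClosed
  have hlsc : LowerSemicontinuousOn (f ∘ (toWeakSpace ℝ X).symm) (toWeakSpace ℝ X '' K) :=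
    lowerSemicontinuousOn_iff_preimage_Iic.2 fun r ↦ ⟨_, hsub r, by
      rw [← image_inter (toWeakSpace ℝ X).injective]
      ext y
      obtain ⟨y, rfl⟩ := (toWeakSpace ℝ X).surjective y
      simp⟩
  obtain ⟨_, ⟨x, hx, rfl⟩, hmin⟩ := hlsc.exists_isMinOn (hne.image _)
    (isCompact_toWeakSpace_image hX hf.1 hclosed hbdd)
  exact ⟨x, hx, fun y hy ↦ by simpa using hmin (mem_image_of_mem _ hy)⟩

end Reflexive

section Atomless

variable {α : Type*} [MeasurableSpace α] {μ : Measure α}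

/-- Atomlessness in the sense of Lyapunov's theorem: every set of positive measure splits into two
parts of positive measure. Mathlib's `NullSingletonClass` asks only that points be null, which is
weaker on a general measurable space. -/
def IsAtomless (μ : Measure α) : Prop :=
  ∀ s, MeasurableSet s → μ s ≠ 0 → ∃ t ⊆ s, MeasurableSet t ∧ μ t ≠ 0 ∧ μ (s \ t) ≠ 0

theorem isAtomless_of_nullSingletonClass [TopologicalSpace α] [SecondCountableTopology α]
    [T2Space α] [OpensMeasurableSpace α] [NullSingletonClass μ] : IsAtomless μ := by
  intro s hs hμs
  obtain ⟨x, -, hx⟩ := exists_mem_forall_mem_nhdsWithin_pos_measure hμs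
  obtain ⟨y, ⟨-, hyx⟩, hy⟩ := exists_mem_forall_mem_nhdsWithin_pos_measure
    (μ := μ) (s := s \ {x}) (by rwa [measure_sdiff_null (measure_singleton x)])
  obtain ⟨U, V, hU, hV, hxU, hyV, hUV⟩ := t2_separation (Ne.symm hyx)
  refine ⟨s ∩ U, inter_subset_left, hs.inter hU.measurableSet,
    (hx _ (inter_mem_nhdsWithin s (hU.mem_nhds hxU))).ne', ne_of_gt ?_⟩
  refine (hy _ (inter_mem_nhdsWithin _ (hV.mem_nhds hyV))).trans_le (measure_mono ?_)
  exact fun z hz ↦ ⟨hz.1.1, fun hzU ↦ disjoint_left.1 hUV hzU.2 hz.2⟩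

theorem IsAtomless.exists_measurable_fin (hμ : IsAtomless μ) (k : ℕ) {s : Set α}
    (hs : MeasurableSet s) (hμs : μ s ≠ 0) :
    ∃ π : α → Fin (k + 1), Measurable π ∧ ∀ i, μ (s ∩ π ⁻¹' {i}) ≠ 0 := by
  classical
  induction k generalizing s with
  | zero => exact ⟨fun _ ↦ 0, measurable_const, fun i ↦ by simpa [Fin.fin_one_eq_zero i] using hμs⟩
  | succ k ih =>
    obtain ⟨t, hts, ht, hμt, hμst⟩ := hμ s hs hμs
    obtain ⟨π, hπ, hfib⟩ := ih (hs.diff ht) hμst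
    refine ⟨fun x ↦ if x ∈ t then 0 else (π x).succ,
      measurable_const.ite ht ((measurable_of_countable Fin.succ).comp hπ), fun i hi ↦ ?_⟩
    cases i using Fin.cases with
    | zero =>
      refine hμt (measure_mono_null (fun x hx ↦ mem_inter (hts hx) ?_) hi)
      simp [hx]
    | succ i =>
      refine hfib i (measure_mono_null (fun x hx ↦ mem_inter hx.1.1 ?_) hi)
      simp [hx.1.2, show π x = i from hx.2]

end Atomless

section Lattice

variable {α : Type*} [MeasurableSpace α] {μ : Measure α} {p : ENNReal}

instance posSMulMono_Lp {F : Type*} [NormedAddCommGroup F] [NormedSpace ℝ F] [PartialOrder F]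
    [PosSMulMono ℝ F] : PosSMulMono ℝ (Lp F p μ) where
  smul_le_smul_of_nonneg_left c hc f g hfg := by
    rw [← Lp.coeFn_le] at hfg ⊢
    filter_upwards [hfg, Lp.coeFn_smul c f, Lp.coeFn_smul c g] with x hx hf hg
    simpa only [hf, hg, Pi.smul_apply] using smul_le_smul_of_nonneg_left hx hc

theorem isBounded_Icc_of_hasSolidNorm {F : Type*} [NormedAddCommGroup F] [Lattice F]
    [HasSolidNorm F] [IsOrderedAddMonoid F] (a b : F) : Bornology.IsBounded (Icc a b) := by
  refine (Metric.isBounded_closedBall (x := a) (r := ‖b - a‖)).subset fun x hx ↦ ?_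
  rw [mem_closedBall_iff_norm]
  refine norm_le_norm_of_abs_le_abs (abs_le_abs_of_nonneg (sub_nonneg.2 hx.1) ?_)
  exact sub_le_sub_right hx.2 a

theorem mem_Icc_const_iff [IsFiniteMeasure μ] {a b : ℝ} {u : Lp ℝ p μ} :
    u ∈ Icc (Lp.const p μ a) (Lp.const p μ b) ↔ ∀ᵐ x ∂μ, u x ∈ Icc a b := by
  simp only [mem_Icc, ← Lp.coeFn_le, Filter.eventually_and]
  exact and_congr
    (Filter.eventually_congr <| (Lp.coeFn_const p μ a).mono fun x hx ↦ by rw [hx]; rfl)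
    (Filter.eventually_congr <| (Lp.coeFn_const p μ b).mono fun x hx ↦ by rw [hx]; rfl)

variable {E : Type*} [AddCommGroup E] [Module ℝ E] [FiniteDimensional ℝ E]

theorem memLp_step_mul {k : ℕ} {π : α → Fin k} (hπ : Measurable π) {g : α → ℝ}
    (hg : MemLp g p μ) (c : Fin k → ℝ) : MemLp (fun x ↦ c (π x) * g x) p μ :=
  hg.of_le_mul (c := ‖c‖)
    (((measurable_of_finite c).comp hπ).aestronglyMeasurable.mul hg.aestronglyMeasurable)
    (.of_forall fun x ↦ by rw [norm_mul]; gcongr; exact norm_le_pi_norm c _)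

/-- The functions `c ∘ π * g`, with `c` ranging over `Fin k → ℝ`, as a linear map into `Lp`: the
multiples of `g` by step functions adapted to the partition into the fibres of `π`. -/
def lpStepMul {k : ℕ} {π : α → Fin k} (hπ : Measurable π) (g : Lp ℝ p μ) :
    (Fin k → ℝ) →ₗ[ℝ] Lp ℝ p μ where
  toFun c := (memLp_step_mul hπ (Lp.memLp g) c).toLp
  map_add' c d := by
    rw [← MemLp.toLp_add]
    exact MemLp.toLp_congr _ _ (.of_forall fun x ↦ add_mul (c (π x)) (d (π x)) (g x))
  map_smul' r c := by
    rw [RingHom.id_apply, ← MemLp.toLp_const_smul]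
    exact MemLp.toLp_congr _ _ (.of_forall fun x ↦ mul_assoc r (c (π x)) (g x))

theorem coeFn_lpStepMul {k : ℕ} {π : α → Fin k} (hπ : Measurable π) (g : Lp ℝ p μ)
    (c : Fin k → ℝ) : lpStepMul hπ g c =ᵐ[μ] fun x ↦ c (π x) * g x :=
  (memLp_step_mul hπ (Lp.memLp g) c).coeFn_toLp

theorem lpStepMul_injective {k : ℕ} {π : α → Fin k} (hπ : Measurable π) {g : Lp ℝ p μ}
    (hfib : ∀ i, μ ({x | g x ≠ 0} ∩ π ⁻¹' {i}) ≠ 0) : Function.Injective (lpStepMul hπ g) := by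
  refine (injective_iff_map_eq_zero _).2 fun c hc ↦ funext fun i ↦ ?_
  by_contra hci
  refine hfib i (measure_eq_zero_iff_ae_notMem.2 ?_)
  filter_upwards [coeFn_lpStepMul hπ g c, (Lp.eq_zero_iff_ae_eq_zero).1 hc] with x hx hx0 hmem
  rw [hx0, show π x = i from hmem.2] at hx
  exact mul_ne_zero hci hmem.1 hx.symm

theorem abs_lpStepMul_le {k : ℕ} {π : α → Fin k} (hπ : Measurable π) {g : Lp ℝ p μ} (hg : 0 ≤ g)
    (c : Fin k → ℝ) : |lpStepMul hπ g c| ≤ ‖c‖ • g := by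
  rw [← Lp.coeFn_le]
  filter_upwards [Lp.coeFn_abs (lpStepMul hπ g c), coeFn_lpStepMul hπ g c, Lp.coeFn_smul ‖c‖ g,
    (Lp.coeFn_nonneg g).2 hg] with x habs hstep hsmul hgx
  rw [habs, hstep, hsmul, abs_mul, abs_of_nonneg hgx]
  exact mul_le_mul_of_nonneg_right (norm_le_pi_norm c _) hgx

theorem IsAtomless.exists_ne_zero_map_eq_zero_abs_le (hμ : IsAtomless μ) (L : Lp ℝ p μ →ₗ[ℝ] E)
    {g : Lp ℝ p μ} (hg : 0 < g) : ∃ h ≠ 0, L h = 0 ∧ |h| ≤ g := by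
  have hsupp : μ {x | g x ≠ 0} ≠ 0 := fun h0 ↦
    hg.ne' (Lp.eq_zero_iff_ae_eq_zero.2 (ae_iff.2 h0))
  obtain ⟨π, hπ, hfib⟩ := hμ.exists_measurable_fin (Module.finrank ℝ E)
    ((Lp.stronglyMeasurable g).measurable (measurableSet_singleton 0).compl) hsupp
  obtain ⟨c, hc, hc0⟩ := Submodule.exists_mem_ne_zero_of_ne_bot
    (LinearMap.ker_ne_bot_of_finrank_lt (f := L ∘ₗ lpStepMul hπ g) (by simp))
  refine ⟨lpStepMul hπ g (‖c‖⁻¹ • c), ?_, ?_, ?_⟩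
  · rw [map_ne_zero_iff _ (lpStepMul_injective hπ hfib)]
    exact smul_ne_zero (inv_ne_zero (norm_ne_zero_iff.2 hc0)) hc0
  · rw [map_smul, map_smul, show L (lpStepMul hπ g c) = 0 from hc, smul_zero]
  · simpa [norm_smul_inv_norm, norm_smul, hc0] using abs_lpStepMul_le hπ hg.le (‖c‖⁻¹ • c)

theorem IsAtomless.inf_sub_eq_zero_of_mem_extremePoints (hμ : IsAtomless μ)
    (L : Lp ℝ p μ →ₗ[ℝ] E) {a b φ : Lp ℝ p μ} {c : E}
    (hφ : φ ∈ (Icc a b ∩ L ⁻¹' {c}).extremePoints ℝ) : (φ - a) ⊓ (b - φ) = 0 := by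
  obtain ⟨⟨⟨haφ, hφb⟩, hLφ⟩, hext⟩ := mem_extremePoints.1 hφ
  by_contra hne
  obtain ⟨h, hh0, hLh, hh⟩ := hμ.exists_ne_zero_map_eq_zero_abs_le L
    ((le_inf (sub_nonneg.2 haφ) (sub_nonneg.2 hφb)).lt_of_ne' hne)
  obtain ⟨hha, hhb⟩ := le_inf_iff.1 hh
  have hmem (e : Lp ℝ p μ) (hLe : L e = 0) (he : |e| = |h|) : φ + e ∈ Icc a b ∩ L ⁻¹' {c} := by
    rw [← he] at hha hhb
    refine ⟨⟨?_, ?_⟩, by simpa [hLe] using hLφ⟩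
    · exact neg_le_sub_iff_le_add.1 ((neg_le_abs e).trans hha)
    · exact le_sub_iff_add_le'.1 ((le_abs_self e).trans hhb)
  have hmid : φ ∈ openSegment ℝ (φ + h) (φ + -h) :=
    ⟨1 / 2, 1 / 2, by norm_num, by norm_num, by norm_num, by module⟩
  have heq := (hext _ (hmem h hLh rfl) _ (hmem (-h) (by simp [hLh]) (abs_neg h)) hmid).1
  exact hh0 (by simpa using heq)

theorem ae_eq_or_eq_of_inf_sub_eq_zero {a b u : Lp ℝ p μ} (h : (u - a) ⊓ (b - u) = 0) :
    ∀ᵐ x ∂μ, u x = a x ∨ u x = b x := by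
  filter_upwards [Lp.eq_zero_iff_ae_eq_zero.1 h, Lp.coeFn_inf (u - a) (b - u), Lp.coeFn_sub u a,
    Lp.coeFn_sub b u] with x h0 hinf hua hbu
  rw [hinf, Pi.inf_apply, hua, hbu, Pi.sub_apply, Pi.sub_apply, Pi.zero_apply] at h0
  rcases min_choice (u x - a x) (b x - u x) with hmin | hmin
  · exact .inl (sub_eq_zero.1 (hmin.symm.trans h0))
  · exact .inr (sub_eq_zero.1 (hmin.symm.trans h0)).symm

theorem IsAtomless.exists_ae_eq_or_eq_map_eq {E : Type*} [NormedAddCommGroup E] [NormedSpace ℝ E]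
    [FiniteDimensional ℝ E] (hμ : IsAtomless μ) (L : Lp ℝ 2 μ →L[ℝ] E) {a b φ : Lp ℝ 2 μ}
    (hφ : φ ∈ Icc a b) : ∃ ψ : Lp ℝ 2 μ, (∀ᵐ x ∂μ, ψ x = a x ∨ ψ x = b x) ∧ L ψ = L φ := by
  obtain ⟨ψ, hψ⟩ := extremePoints_nonempty_of_isClosed_of_isBounded
    (surjective_inclusionInDoubleDual_of_innerProductSpace (Lp ℝ 2 μ))
    (K := Icc a b ∩ L ⁻¹' {L φ}) ⟨φ, hφ, rfl⟩
    ((convex_Icc a b).inter ((convex_singleton _).linear_preimage L.toLinearMap))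
    (isClosed_Icc.inter (isClosed_singleton.preimage L.continuous))
    ((isBounded_Icc_of_hasSolidNorm a b).subset inter_subset_left)
  exact ⟨ψ, ae_eq_or_eq_of_inf_sub_eq_zero
    (hμ.inf_sub_eq_zero_of_mem_extremePoints L.toLinearMap hψ), hψ.1.2⟩

end Lattice

section Ternary

theorem abs_le_one_of_mem_ternary {r : ℝ} (hr : r ∈ ({-1, 0, 1} : Set ℝ)) : |r| ≤ 1 := by
  rcases hr with rfl | rfl | rfl <;> simp

theorem coe_sign_mem_ternary (x : ℝ) : (SignType.sign x : ℝ) ∈ ({-1, 0, 1} : Set ℝ) := by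
  rcases SignType.trichotomy (SignType.sign x) with h | h | h <;> simp [h]

theorem monotone_signType_cast : Monotone ((↑) : SignType → ℝ) := by
  rintro (_ | _ | _) (_ | _ | _) h <;> first | exact absurd h (by decide) | norm_num

theorem measurable_coe_sign : Measurable fun x : ℝ ↦ (SignType.sign x : ℝ) :=
  (monotone_signType_cast.comp SignType.sign.monotone).measurable

variable {α : Type*} [MeasurableSpace α] {μ : Measure α} {u : α → ℝ}

theorem integral_abs_eq_measureReal_support (hu : Measurable u)
    (hu3 : ∀ x, u x ∈ ({-1, 0, 1} : Set ℝ)) : ∫ x, |u x| ∂μ = μ.real (Function.support u) := by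
  rw [← integral_indicator_one (measurableSet_support hu)]
  congr with x
  obtain h | h | h : u x = -1 ∨ u x = 0 ∨ u x = 1 := hu3 x <;> simp [h, indicator]

theorem integral_abs_le_measureReal_support [IsFiniteMeasure μ] (hu : Measurable u)
    (hu1 : ∀ᵐ x ∂μ, |u x| ≤ 1) : ∫ x, |u x| ∂μ ≤ μ.real (Function.support u) := by
  rw [← integral_indicator_one (measurableSet_support hu)]
  refine integral_mono_ae (Integrable.of_bound hu.abs.aestronglyMeasurable 1 (by simpa using hu1))
    ((integrable_const 1).indicator (measurableSet_support hu)) ?_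
  filter_upwards [hu1] with x hx
  by_cases h : u x = 0 <;> simp [h, hx]

end Ternary

section Compact

theorem memLp_restrict_of_continuousOn {α F : Type*} [TopologicalSpace α] [MeasurableSpace α]
    [OpensMeasurableSpace α] {μ : Measure α} [IsFiniteMeasureOnCompacts μ] [NormedAddCommGroup F]
    {f : α → F} {K : Set α} (hf : ContinuousOn f K) (hK : IsCompact K) (hKm : MeasurableSet K)
    (p : ENNReal) : MemLp f p (μ.restrict K) := by
  have := isFiniteMeasure_restrict.2 (hK.measure_ne_top (μ := μ))
  obtain ⟨C, hC⟩ := hK.exists_bound_of_continuousOn hf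
  exact .of_bound (hf.aestronglyMeasurable_of_isCompact hK hKm) C ((ae_restrict_mem hKm).mono hC)

end Compact

section Moment

variable {α : Type*} [MeasurableSpace α] {μ : Measure α} {E : Type*} [NormedAddCommGroup E]
  [NormedSpace ℝ E]

section Pairing

variable {p q : ENNReal} [Fact (1 ≤ p)] [Fact (1 ≤ q)] [p.HolderConjugate q] {f : α → E}
  [CompleteSpace E]

/-- The moment operator `u ↦ ∫ u • f` on `Lp` for a vector-valued integrand `f` in the conjugate
space. For `f s = e^{-As} B` it sends a control to the state displacement it produces. -/
def momentMap (p : ENNReal) [Fact (1 ≤ p)] [p.HolderConjugate q] (hf : MemLp f q μ) :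
    Lp ℝ p μ →L[ℝ] E :=
  ((ContinuousLinearMap.lsmul ℝ ℝ).lpPairing μ p q).flip hf.toLp

theorem momentMap_apply (hf : MemLp f q μ) (u : Lp ℝ p μ) :
    momentMap p hf u = ∫ x, u x • f x ∂μ := by
  refine (ContinuousLinearMap.lpPairing_eq_integral _ u hf.toLp).trans (integral_congr_ae ?_)
  filter_upwards [hf.coeFn_toLp] with x hx
  rw [hx, ContinuousLinearMap.lsmul_apply]

theorem momentMap_toLp (hf : MemLp f q μ) {u : α → ℝ} (hu : MemLp u p μ) :
    momentMap p hf hu.toLp = ∫ x, u x • f x ∂μ := by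
  rw [momentMap_apply]
  refine integral_congr_ae ?_
  filter_upwards [hu.coeFn_toLp] with x hx
  rw [hx]

end Pairing

variable [IsFiniteMeasure μ] {f : α → E}

theorem IsAtomless.exists_measurableSet_setIntegral_eq [FiniteDimensional ℝ E]
    (hμ : IsAtomless μ) (hf : MemLp f 2 μ) {φ : α → ℝ} (hφ : AEStronglyMeasurable φ μ)
    (hφ01 : ∀ᵐ x ∂μ, φ x ∈ Icc 0 1) :
    ∃ s, MeasurableSet s ∧ ∫ x in s, f x ∂μ = ∫ x, φ x • f x ∂μ := by
  have := FiniteDimensional.complete ℝ E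
  have hφ2 : MemLp φ 2 μ := memLp_of_bounded hφ01 hφ 2
  have hmem : hφ2.toLp ∈ Icc (Lp.const 2 μ 0) (Lp.const 2 μ 1) := by
    refine mem_Icc_const_iff.2 ?_
    filter_upwards [hφ2.coeFn_toLp, hφ01] with x hx hx01
    rwa [hx]
  obtain ⟨ψ, hψ01, hψφ⟩ := hμ.exists_ae_eq_or_eq_map_eq (momentMap 2 hf) hmem
  have hs : MeasurableSet {x | ψ x = 1} :=
    (Lp.stronglyMeasurable ψ).measurable (measurableSet_singleton 1)
  refine ⟨_, hs, ?_⟩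
  calc ∫ x in {x | ψ x = 1}, f x ∂μ = ∫ x, {x | ψ x = 1}.indicator f x ∂μ :=
        (integral_indicator hs).symm
    _ = ∫ x, ψ x • f x ∂μ := integral_congr_ae <| by
        filter_upwards [hψ01, Lp.coeFn_const 2 μ (0 : ℝ), Lp.coeFn_const 2 μ (1 : ℝ)]
          with x hx h0 h1
        rw [h0, h1] at hx
        rcases hx with hx | hx <;> simp [hx, indicator]
    _ = ∫ x, φ x • f x ∂μ := by rw [← momentMap_apply hf, hψφ, momentMap_toLp]

theorem IsAtomless.exists_measurableSet_setIntegral_eq_and_eq {F : Type*} [NormedAddCommGroup F]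
    [NormedSpace ℝ F] [FiniteDimensional ℝ E] [FiniteDimensional ℝ F] (hμ : IsAtomless μ)
    (hf : MemLp f 2 μ) {g : α → F} (hg : MemLp g 2 μ) {φ : α → ℝ}
    (hφ : AEStronglyMeasurable φ μ) (hφ01 : ∀ᵐ x ∂μ, φ x ∈ Icc 0 1) :
    ∃ s, MeasurableSet s ∧ ∫ x in s, f x ∂μ = ∫ x, φ x • f x ∂μ ∧
      ∫ x in s, g x ∂μ = ∫ x, φ x • g x ∂μ := by
  have := FiniteDimensional.complete ℝ E
  have := FiniteDimensional.complete ℝ F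
  have hφ2 : MemLp φ 2 μ := memLp_of_bounded hφ01 hφ 2
  have hφf : Integrable (fun x ↦ φ x • f x) μ := memLp_one_iff_integrable.1 (hf.smul hφ2)
  have hφg : Integrable (fun x ↦ φ x • g x) μ := memLp_one_iff_integrable.1 (hg.smul hφ2)
  have hfg : MemLp (fun x ↦ (f x, g x)) 2 μ := memLp_prod_iff.2 ⟨hf, hg⟩
  obtain ⟨s, hs, hsφ⟩ := hμ.exists_measurableSet_setIntegral_eq hfg hφ hφ01
  simp only [Prod.smul_mk] at hsφ
  rw [integral_pair (hf.integrable one_le_two).integrableOn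
    (hg.integrable one_le_two).integrableOn, integral_pair hφf hφg] at hsφ
  exact ⟨s, hs, Prod.ext_iff.1 hsφ⟩

/-- The scalar controls of magnitude at most `1` whose moment against `f` is `c`. They are genuine
measurable functions, as in `Admissible`, but the bound is required only almost everywhere. -/
def boundedControls (μ : Measure α) (f : α → E) (c : E) : Set (α → ℝ) :=
  {u | Measurable u ∧ (∀ᵐ x ∂μ, |u x| ≤ 1) ∧ ∫ x, u x • f x ∂μ = c}

theorem exists_continuousLinearMap_norm_eq_integral_abs (μ : Measure α) [IsFiniteMeasure μ] :
    ∃ ι : Lp ℝ 2 μ →L[ℝ] Lp ℝ 1 μ, ∀ u, ‖ι u‖ = ∫ x, |u x| ∂μ := by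
  refine ⟨(ContinuousLinearMap.lsmul ℝ ℝ).holderL μ 2 2 1 (Lp.const 2 μ 1), fun u ↦ ?_⟩
  rw [L1.norm_eq_integral_norm]
  refine integral_congr_ae ?_
  filter_upwards [(ContinuousLinearMap.lsmul ℝ ℝ).coeFn_holder (r := 1) (Lp.const 2 μ 1) u,
    Lp.coeFn_const 2 μ (1 : ℝ)] with x hx h1
  refine (congrArg norm hx).trans ?_
  rw [h1, Function.const_apply, ContinuousLinearMap.lsmul_apply, one_smul, Real.norm_eq_abs]

theorem exists_isMinOn_integral_abs_boundedControls [CompleteSpace E] (hf : MemLp f 2 μ) {c : E}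
    (hne : (boundedControls μ f c).Nonempty) :
    ∃ u ∈ boundedControls μ f c, IsMinOn (fun u ↦ ∫ x, |u x| ∂μ) (boundedControls μ f c) u := by
  set L := momentMap 2 hf
  obtain ⟨ι, hι⟩ := exists_continuousLinearMap_norm_eq_integral_abs μ
  set K := Icc (Lp.const 2 μ (-1)) (Lp.const 2 μ 1) ∩ L ⁻¹' {c}
  have hconv : Convex ℝ K :=
    (convex_Icc _ _).inter ((convex_singleton c).linear_preimage L.toLinearMap)
  have hK (v) (hv : v ∈ boundedControls μ f c) : ∃ w ∈ K, ‖ι w‖ = ∫ x, |v x| ∂μ := by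
    obtain ⟨hvm, hv1, hvc⟩ := hv
    have hv2 := memLp_of_bounded (hv1.mono fun _ ↦ abs_le.1) hvm.aestronglyMeasurable 2
    refine ⟨hv2.toLp, ⟨mem_Icc_const_iff.2 ?_, (momentMap_toLp hf hv2).trans hvc⟩,
      (hι _).trans (integral_congr_ae ?_)⟩
    · filter_upwards [hv2.coeFn_toLp, hv1] with x hx hx1
      rw [hx]
      exact abs_le.1 hx1
    · filter_upwards [hv2.coeFn_toLp] with x hx
      rw [hx]
  obtain ⟨u, ⟨hu1, huc⟩, hmin⟩ := exists_isMinOn_of_convexOn_of_isBounded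
    (surjective_inclusionInDoubleDual_of_innerProductSpace (Lp ℝ 2 μ))
    (((convexOn_norm convex_univ).comp_linearMap ι.toLinearMap).subset (subset_univ _) hconv)
    ι.continuous.norm.continuousOn (hne.elim fun v hv ↦ (hK v hv).imp fun _ ↦ And.left)
    (isClosed_Icc.inter (isClosed_singleton.preimage L.continuous))
    ((isBounded_Icc_of_hasSolidNorm _ _).subset inter_subset_left)
  refine ⟨u, ⟨(Lp.stronglyMeasurable u).measurable,
    (mem_Icc_const_iff.1 hu1).mono fun _ ↦ abs_le.2, (momentMap_apply hf u).symm.trans huc⟩,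
    fun v hv ↦ ?_⟩
  obtain ⟨w, hw, hwv⟩ := hK v hv
  exact (hι u).symm.trans_le ((hmin hw).trans_eq hwv)

theorem IsAtomless.exists_mem_boundedControls_ternary [FiniteDimensional ℝ E]
    (hμ : IsAtomless μ) (hf : MemLp f 2 μ) {c : E} {u : α → ℝ} (hu : u ∈ boundedControls μ f c) :
    ∃ v ∈ boundedControls μ f c, (∀ x, v x ∈ ({-1, 0, 1} : Set ℝ)) ∧
      ∫ x, |v x| ∂μ = ∫ x, |u x| ∂μ := by
  have := FiniteDimensional.complete ℝ E
  obtain ⟨hum, hu1, huc⟩ := hu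
  set σ : α → ℝ := fun x ↦ SignType.sign (u x)
  have hσ : Measurable σ := measurable_coe_sign.comp hum
  have hσ1 (x) : |σ x| ≤ 1 := abs_le_one_of_mem_ternary (coe_sign_mem_ternary (u x))
  have habs (x) : |u x| * σ x = u x := (mul_comm _ _).trans (sign_mul_abs (u x))
  have habs' (x) : |u x| * |σ x| = |u x| := by
    simpa only [abs_mul, abs_abs] using congrArg abs (habs x)
  have hσf : MemLp (fun x ↦ σ x • f x) 2 μ :=
    hf.of_le (hσ.aestronglyMeasurable.smul hf.1) (.of_forall fun x ↦ by
      rw [norm_smul]; exact mul_le_of_le_one_left (norm_nonneg _) (hσ1 x))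
  have hσσ : MemLp (fun x ↦ |σ x|) 2 μ :=
    memLp_of_bounded (.of_forall fun x ↦ ⟨abs_nonneg _, hσ1 x⟩) hσ.abs.aestronglyMeasurable 2
  obtain ⟨s, hs, hmoment, hcost⟩ := hμ.exists_measurableSet_setIntegral_eq_and_eq hσf hσσ
    hum.abs.aestronglyMeasurable (hu1.mono fun x hx ↦ ⟨abs_nonneg _, hx⟩)
  simp only [smul_smul, smul_eq_mul, habs, habs'] at hmoment hcost
  have hv (x) : s.indicator σ x ∈ ({-1, 0, 1} : Set ℝ) := by
    by_cases hx : x ∈ s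
    · simpa only [hx, indicator_of_mem] using coe_sign_mem_ternary (u x)
    · simp [hx]
  refine ⟨s.indicator σ, ⟨hσ.indicator hs, .of_forall fun x ↦ abs_le_one_of_mem_ternary (hv x),
    ?_⟩, hv, ?_⟩
  · rw [← indicator_smul_left, integral_indicator hs, hmoment, huc]
  · simp only [← Real.norm_eq_abs, norm_indicator_eq_indicator_norm, integral_indicator hs]
    exact hcost

theorem IsAtomless.exists_isMinOn_integral_abs_ternary [FiniteDimensional ℝ E]
    (hμ : IsAtomless μ) (hf : MemLp f 2 μ) {c : E} (hne : (boundedControls μ f c).Nonempty) :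
    ∃ u ∈ boundedControls μ f c, (∀ x, u x ∈ ({-1, 0, 1} : Set ℝ)) ∧
      IsMinOn (fun u ↦ ∫ x, |u x| ∂μ) (boundedControls μ f c) u := by
  have := FiniteDimensional.complete ℝ E
  obtain ⟨u, hu, hmin⟩ := exists_isMinOn_integral_abs_boundedControls hf hne
  obtain ⟨v, hv, hv3, hvu⟩ := hμ.exists_mem_boundedControls_ternary hf hu
  exact ⟨v, hv, hv3, fun w hw ↦ hvu.trans_le (hmin hw)⟩

end Moment

section Control

variable {n : ℕ} {T : ℝ} {A : Matrix (Fin n) (Fin n) ℝ} {B ξ : Fin n → ℝ} {u : ℝ → ℝ}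

section MatrixNorm

attribute [local instance] Matrix.linftyOpNormedRing Matrix.linftyOpNormedAlgebra

theorem continuous_exp_neg_smul_mulVec (A : Matrix (Fin n) (Fin n) ℝ) (B : Fin n → ℝ) :
    Continuous fun s : ℝ ↦ (NormedSpace.exp ((-s) • A)).mulVec B := by
  let : NormedAlgebra ℚ (Matrix (Fin n) (Fin n) ℝ) := NormedAlgebra.restrictScalars ℚ ℝ _
  have hexp : Continuous fun s : ℝ ↦ NormedSpace.exp ((-s) • A) :=
    NormedSpace.exp_continuous.comp (by fun_prop)
  exact hexp.matrix_mulVec continuous_const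

end MatrixNorm

theorem memLp_exp_neg_smul_mulVec (T : ℝ) (A : Matrix (Fin n) (Fin n) ℝ) (B : Fin n → ℝ)
    (p : ENNReal) :
    MemLp (fun s ↦ (NormedSpace.exp ((-s) • A)).mulVec B) p (volume.restrict (Icc 0 T)) :=
  memLp_restrict_of_continuousOn (continuous_exp_neg_smul_mulVec A B).continuousOn isCompact_Icc
    measurableSet_Icc p

theorem Admissible.mem_boundedControls (h : Admissible n T A B ξ u) :
    u ∈ boundedControls (volume.restrict (Icc 0 T))
      (fun s ↦ (NormedSpace.exp ((-s) • A)).mulVec B) (-ξ) :=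
  ⟨h.1, (ae_restrict_mem measurableSet_Icc).mono h.2.1, h.2.2⟩

theorem exists_admissible_of_mem_reach (hξ : ξ ∈ Reach n T A B) : ∃ u, Admissible n T A B ξ u := by
  obtain ⟨u, hu, hu1, rfl⟩ := hξ
  refine ⟨-u, hu.neg, fun t ht ↦ (abs_neg _).trans_le (hu1 t ht), ?_⟩
  simp only [stateInt, Pi.neg_apply, neg_smul, integral_neg]

theorem L0Norm_eq_measureReal_support (hu : Measurable u) :
    L0Norm T u = (volume.restrict (Icc 0 T)).real (Function.support u) := by
  rw [measureReal_restrict_apply (measurableSet_support hu), inter_comm]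
  rfl

theorem L1Norm_le_L0Norm (hu : Measurable u) (hu1 : MagBdd T u) : L1Norm T u ≤ L0Norm T u :=
  (integral_abs_le_measureReal_support hu ((ae_restrict_mem measurableSet_Icc).mono hu1)).trans_eq
    (L0Norm_eq_measureReal_support hu).symm

theorem L1Norm_eq_L0Norm (hu : Measurable u) (hu3 : ∀ t, u t ∈ ({-1, 0, 1} : Set ℝ)) :
    L1Norm T u = L0Norm T u :=
  (integral_abs_eq_measureReal_support hu hu3).trans (L0Norm_eq_measureReal_support hu).symm

theorem exists_admissible_ternary_forall_L1Norm_le (hξ : ξ ∈ Reach n T A B) :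
    ∃ u, Admissible n T A B ξ u ∧ (∀ t, u t ∈ ({-1, 0, 1} : Set ℝ)) ∧
      ∀ w, Admissible n T A B ξ w → L1Norm T u ≤ L1Norm T w := by
  obtain ⟨w, hw⟩ := exists_admissible_of_mem_reach hξ
  obtain ⟨u, ⟨hu, -, huξ⟩, hu3, hmin⟩ :=
    isAtomless_of_nullSingletonClass.exists_isMinOn_integral_abs_ternary
      (memLp_exp_neg_smul_mulVec T A B 2) ⟨w, hw.mem_boundedControls⟩
  exact ⟨u, ⟨hu, fun t _ ↦ abs_le_one_of_mem_ternary (hu3 t), huξ⟩, hu3,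
    fun w hw ↦ hmin hw.mem_boundedControls⟩

end Control

theorem maximum_handsoff_optimal_control_exists_general (n : ℕ) (T : ℝ)
    (A : Matrix (Fin n) (Fin n) ℝ) (B : Fin n → ℝ) :
    ∀ ξ ∈ Reach n T A B,
      ∃ u, Admissible n T A B ξ u ∧
        (∀ᵐ t ∂(volume.restrict (Icc (0 : ℝ) T)), u t ∈ ({-1, 0, 1} : Set ℝ)) ∧
        L0Norm T u = V0 n T A B ξ ∧ L1Norm T u = V0 n T A B ξ := by
  intro ξ hξ
  obtain ⟨u, hu, hu3, hmin⟩ := exists_admissible_ternary_forall_L1Norm_le hξ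
  have hL : L1Norm T u = L0Norm T u := L1Norm_eq_L0Norm hu.1 hu3
  have hV : V0 n T A B ξ = L0Norm T u := by
    refine IsLeast.csInf_eq ⟨⟨u, hu, rfl⟩, ?_⟩
    rintro _ ⟨w, hw, rfl⟩
    calc L0Norm T u = L1Norm T u := hL.symm
      _ ≤ L1Norm T w := hmin w hw
      _ ≤ L0Norm T w := L1Norm_le_L0Norm hw.1 hw.2.1
  exact ⟨u, hu, .of_forall hu3, hV.symm, hL.trans hV.symm⟩

theorem maximum_handsoff_optimal_control_exists (n : ℕ) (T : ℝ) (hT : 0 < T)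
    (A : Matrix (Fin n) (Fin n) ℝ) (B : Fin n → ℝ)
    (hctrb : (ctrbMatrix n A B).rank = n) (hA : A.det ≠ 0) :
    ∀ ξ ∈ Reach n T A B,
      ∃ u, Admissible n T A B ξ u ∧
        (∀ᵐ t ∂(volume.restrict (Icc (0:ℝ) T)), u t ∈ ({-1, 0, 1} : Set ℝ)) ∧
        L0Norm T u = V0 n T A B ξ ∧ L1Norm T u = V0 n T A B ξ :=
  maximum_handsoff_optimal_control_exists_general n T A B
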